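/- arXiv:1301.4421 — 9 statements merged into one kernel-verified Lean document; each statement's English description precedes it below -/
import Mathlib

section
/- If a map M admits an I-coloring and a J-coloring (for subsets I, J of {0,1,2}), then M admits an (IΔJ)-coloring. Consequently, T(M) is a subgroup of the power set of {0,1,2} under the symmetric difference operation Δ. -/
/-- A (combinatorial) map: a nonempty set of flags `Ω` together with three
permutations `r 0, r 1, r 2` which are fixed-point-free involutions, such that
`r 0` and `r 2` commute with fixed-point-free product, and such that the
connection group `⟨r 0, r 1, r 2⟩` acts transitively on `Ω`. -/
structure CMap (Ω : Type) where
  r : Fin 3 → Equiv.Perm Ω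
  nonempty : Nonempty Ω
  invol : ∀ (i : Fin 3) (f : Ω), r i (r i f) = f
  fpf : ∀ (i : Fin 3) (f : Ω), r i f ≠ f
  comm02 : ∀ f : Ω, r 0 (r 2 f) = r 2 (r 0 f)
  fpf02 : ∀ f : Ω, r 0 (r 2 f) ≠ f
  flag_transitive : ∀ f g : Ω,
    ∃ w ∈ Subgroup.closure ({r 0, r 1, r 2} : Set (Equiv.Perm Ω)), w f = g

/-- `a` is an `I`-coloring with respect to the connections `r`. -/
def IsColoringOn {Ω : Type} (r : Fin 3 → Ω → Ω) (I : Set (Fin 3)) (a : Ω → ZMod 2) : Prop :=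
  ∀ (f : Ω) (j : Fin 3), (j ∈ I → a (r j f) = a f + 1) ∧ (j ∉ I → a (r j f) = a f)

/-- There exists an `I`-coloring with respect to the connections `r`. -/
def ColorableOn {Ω : Type} (r : Fin 3 → Ω → Ω) (I : Set (Fin 3)) : Prop :=
  ∃ a : Ω → ZMod 2, IsColoringOn r I a

/-- `a` is an `I`-coloring of the map `M`. -/
def CMap.IsColoring {Ω : Type} (M : CMap Ω) (I : Set (Fin 3)) (a : Ω → ZMod 2) : Prop :=
  IsColoringOn (fun j f => M.r j f) I a

/-- The map `M` admits an `I`-coloring. -/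
def CMap.Colorable {Ω : Type} (M : CMap Ω) (I : Set (Fin 3)) : Prop :=
  ∃ a : Ω → ZMod 2, M.IsColoring I a

/-- `T M` is the collection of subsets `I ⊆ {0,1,2}` for which `M` is `I`-colorable. -/
def CMap.T {Ω : Type} (M : CMap Ω) : Set (Set (Fin 3)) :=
  {I | M.Colorable I}

/-- If `M` admits an `I`-coloring and a `J`-coloring then it admits
an `I Δ J`-coloring; consequently `T M` is a subgroup of the power set of
`{0,1,2}` under symmetric difference (it contains the identity `∅` and is
closed under the group operation `Δ`; every element is its own inverse). -/
theorem colorable_symmDiff_and_T_subgroup {Ω : Type} (M : CMap Ω) :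
    (∀ I J : Set (Fin 3), M.Colorable I → M.Colorable J → M.Colorable (symmDiff I J)) ∧
      (∅ ∈ M.T ∧ ∀ I ∈ M.T, ∀ J ∈ M.T, symmDiff I J ∈ M.T) := by
  have key : ∀ I J : Set (Fin 3), M.Colorable I → M.Colorable J →
      M.Colorable (symmDiff I J) := by
    rintro I J ⟨a, ha⟩ ⟨b, hb⟩
    refine ⟨fun f => a f + b f, fun f j => ?_⟩
    have h1 := ha f j
    have h2 := hb f j
    have two : (1 : ZMod 2) + 1 = 0 := by decide
    rw [Set.mem_symmDiff]
    dsimp only at h1 h2 ⊢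
    by_cases hI : j ∈ I <;> by_cases hJ : j ∈ J
    · refine ⟨fun h => by tauto, fun _ => ?_⟩
      rw [h1.1 hI, h2.1 hJ, add_add_add_comm, two, add_zero]
    · refine ⟨fun _ => ?_, fun h => by tauto⟩
      rw [h1.1 hI, h2.2 hJ, add_right_comm]
    · refine ⟨fun _ => ?_, fun h => by tauto⟩
      rw [h1.2 hI, h2.1 hJ, add_assoc]
    · refine ⟨fun h => by tauto, fun _ => ?_⟩
      rw [h1.2 hI, h2.2 hJ]
  refine ⟨key, ⟨fun _ => 0, fun f j => ⟨fun h => absurd h (Set.notMem_empty j), fun _ => rfl⟩⟩,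
    fun I hI J hJ => key I J hI hJ⟩
end

section
/- Suppose M and N are maps that are both I-colorable for some I ⊆ {0,1,2}, and suppose the connected sum M⊕N exists with respect to flags f_M and f_N. Then M⊕N is I-colorable. -/
/-- The face of `M` containing the flag `f`: the orbit of `f` under `⟨r 0, r 1⟩`. -/
def CMap.faceOf {Ω : Type} (M : CMap Ω) (f : Ω) : Set Ω :=
  {g | ∃ w ∈ Subgroup.closure ({M.r 0, M.r 1} : Set (Equiv.Perm Ω)), w f = g}

/-- `g ↦ g·r₀r₁`, so `(M.faceStep)^[j] f = f·(r₀r₁)ʲ`. -/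
def CMap.faceStep {Ω : Type} (M : CMap Ω) (g : Ω) : Ω :=
  M.r 1 (M.r 0 g)

/-- The flag set `(Ω ∖ F_M) ∪ (Ω' ∖ F_N)` of the connected sum. -/
def connSumFlags {Ω Ω' : Type} (M : CMap Ω) (N : CMap Ω') (fM : Ω) (fN : Ω') : Set (Ω ⊕ Ω') :=
  {x | Sum.elim (fun g => g ∉ M.faceOf fM) (fun g => g ∉ N.faceOf fN) x}

theorem CMap.faceOf_r {Ω : Type} (M : CMap Ω) (f g : Ω) (i : Fin 3) (hi : i = 0 ∨ i = 1)
    (hg : g ∈ M.faceOf f) : M.r i g ∈ M.faceOf f := by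
  obtain ⟨w, hw, rfl⟩ := hg
  refine ⟨M.r i * w, Subgroup.mul_mem _ (Subgroup.subset_closure ?_) hw, rfl⟩
  rcases hi with rfl | rfl <;> simp

theorem CMap.self_mem_faceOf {Ω : Type} (M : CMap Ω) (f : Ω) : f ∈ M.faceOf f :=
  ⟨1, Subgroup.one_mem _, rfl⟩

theorem CMap.iter_mem {Ω : Type} (M : CMap Ω) (f g : Ω) (hg : g ∈ M.faceOf f) (j : ℕ) :
    (M.faceStep)^[j] g ∈ M.faceOf f := by
  induction j with
  | zero => exact hg
  | succ j ih =>
    rw [Function.iterate_succ_apply']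
    exact M.faceOf_r _ _ _ (Or.inr rfl) (M.faceOf_r _ _ _ (Or.inl rfl) ih)

theorem CMap.step_inj {Ω : Type} (M : CMap Ω) : Function.Injective M.faceStep :=
  (M.r 1).injective.comp (M.r 0).injective

theorem CMap.periodic {Ω : Type} (M : CMap Ω) (f g : Ω) (hf : (M.faceOf f).Finite)
    (hg : g ∈ M.faceOf f) : ∃ k : ℕ, (M.faceStep)^[k + 1] g = g := by
  obtain ⟨m, n, hmn, h⟩ := Set.Finite.exists_lt_map_eq_of_forall_mem
    (f := fun j : ℕ => (M.faceStep)^[j] g) (M.iter_mem f g hg) hf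
  obtain ⟨k, rfl⟩ := Nat.exists_eq_add_of_lt hmn
  refine ⟨k, M.step_inj.iterate m ?_⟩
  rw [← Function.iterate_add_apply, ← add_assoc]
  exact h.symm

/-- The flags listed in the definition of the connected sum. -/
def CMap.listed {Ω : Type} (M : CMap Ω) (f : Ω) : Set Ω :=
  {x | ∃ j : ℕ, x = (M.faceStep)^[j] f ∨ x = (M.faceStep)^[j] (M.r 1 f)}

theorem CMap.face_sub_listed {Ω : Type} (M : CMap Ω) (f : Ω) (hf : (M.faceOf f).Finite) :
    M.faceOf f ⊆ M.listed f := by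
  have hsub : ∀ x ∈ M.listed f, x ∈ M.faceOf f := by
    rintro x ⟨j, rfl | rfl⟩
    · exact M.iter_mem _ _ (M.self_mem_faceOf f) j
    · exact M.iter_mem _ _ (M.faceOf_r _ _ _ (Or.inr rfl) (M.self_mem_faceOf f)) j
  have hit : ∀ k : ℕ, ∀ x ∈ M.listed f, (M.faceStep)^[k] x ∈ M.listed f := by
    rintro k x ⟨j, rfl | rfl⟩
    · exact ⟨k + j, Or.inl (Function.iterate_add_apply _ _ _ _).symm⟩
    · exact ⟨k + j, Or.inr (Function.iterate_add_apply _ _ _ _).symm⟩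
  have hinv : ∀ x ∈ M.listed f, M.r 0 (M.r 1 x) ∈ M.listed f := by
    intro x hx
    obtain ⟨k, hk⟩ := M.periodic f x hf (hsub x hx)
    rw [Function.iterate_succ_apply'] at hk
    have : M.r 0 (M.r 1 x) = (M.faceStep)^[k] x := by
      apply M.step_inj
      rw [hk]
      simp [CMap.faceStep, M.invol]
    rw [this]
    exact hit k x hx
  have aux : ∀ y, M.r 1 y ∈ M.listed f → ∀ j : ℕ,
      M.r 1 ((M.faceStep)^[j] y) ∈ M.listed f := by
    intro y hy j
    induction j with
    | zero => exact hy
    | succ j ih =>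
      have := hinv _ ih
      rw [M.invol] at this
      rw [Function.iterate_succ_apply', CMap.faceStep, M.invol]
      exact this
  have hr1 : ∀ x ∈ M.listed f, M.r 1 x ∈ M.listed f := by
    rintro x ⟨j, rfl | rfl⟩
    · exact aux f ⟨0, Or.inr rfl⟩ j
    · exact aux (M.r 1 f) ⟨0, Or.inl (M.invol 1 f)⟩ j
  have hr0 : ∀ x ∈ M.listed f, M.r 0 x ∈ M.listed f := by
    intro x hx
    have := hinv _ (hr1 x hx)
    rwa [M.invol] at this
  rintro g ⟨w, hw, rfl⟩
  have key : ∀ x, x ∈ M.listed f ↔ w x ∈ M.listed f := by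
    induction hw using Subgroup.closure_induction with
    | mem v hv =>
      intro x
      rcases hv with rfl | rfl
      · exact ⟨hr0 x, fun h => by simpa [M.invol] using hr0 _ h⟩
      · exact ⟨hr1 x, fun h => by simpa [M.invol] using hr1 _ h⟩
    | one => intro x; rfl
    | mul u v _ _ hu hv => intro x; exact (hv x).trans (hu (v x))
    | inv u _ hu => intro x; have := hu (u⁻¹ x); simpa using this.symm
  exact (key f).1 ⟨0, Or.inl rfl⟩

open Classical in
/-- The increment of an `I`-coloring along connection `j`. -/
noncomputable def colInc (I : Set (Fin 3)) (j : Fin 3) : ZMod 2 := if j ∈ I then 1 else 0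

theorem isColoringOn_iff {Ω : Type} (r : Fin 3 → Ω → Ω) (I : Set (Fin 3)) (a : Ω → ZMod 2) :
    IsColoringOn r I a ↔ ∀ f j, a (r j f) = a f + colInc I j := by
  refine forall_congr' fun f => forall_congr' fun j => ?_
  by_cases h : j ∈ I <;> simp [h, colInc]

theorem col_iter {Ω : Type} (M : CMap Ω) (I : Set (Fin 3)) (a : Ω → ZMod 2)
    (ha : ∀ f j, a (M.r j f) = a f + colInc I j) (f : Ω) (k : ℕ) :
    a ((M.faceStep)^[k] f) = a f + k * (colInc I 0 + colInc I 1) := by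
  induction k with
  | zero => simp
  | succ k ih =>
    rw [Function.iterate_succ_apply', CMap.faceStep, ha, ha, ih]
    push_cast
    ring

/-- if `M` and `N` are `I`-colorable and the connected sum `M ⊕ N`
(with respect to flags `fM`, `fN` whose faces are finite of the same size and
not `r₂`-connected to themselves) exists — formalized as a map `P` on
`(Ω ∖ F_M) ∪ (Ω' ∖ F_N)` whose connections are as prescribed — then `M ⊕ N`
is `I`-colorable. -/
theorem connSum_colorable {Ω Ω' : Type} (M : CMap Ω) (N : CMap Ω') (fM : Ω) (fN : Ω')
    (hM2 : ∀ g ∈ M.faceOf fM, M.r 2 g ∉ M.faceOf fM)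
    (hN2 : ∀ g ∈ N.faceOf fN, N.r 2 g ∉ N.faceOf fN)
    (hMfin : (M.faceOf fM).Finite) (hNfin : (N.faceOf fN).Finite)
    (hcard : (M.faceOf fM).ncard = (N.faceOf fN).ncard)
    (P : CMap ↥(connSumFlags M N fM fN))
    (h0 : ∀ x : ↥(connSumFlags M N fM fN),
      (P.r 0 x).1 = Sum.map (M.r 0) (N.r 0) x.1)
    (h1 : ∀ x : ↥(connSumFlags M N fM fN),
      (P.r 1 x).1 = Sum.map (M.r 1) (N.r 1) x.1)
    (h2a : ∀ (x : ↥(connSumFlags M N fM fN)) (g : Ω), x.1 = Sum.inl g →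
      M.r 2 g ∉ M.faceOf fM → (P.r 2 x).1 = Sum.inl (M.r 2 g))
    (h2b : ∀ (x : ↥(connSumFlags M N fM fN)) (g : Ω'), x.1 = Sum.inr g →
      N.r 2 g ∉ N.faceOf fN → (P.r 2 x).1 = Sum.inr (N.r 2 g))
    (h2c : ∀ (j : ℕ) (x : ↥(connSumFlags M N fM fN)),
      x.1 = Sum.inl (M.r 2 ((M.faceStep)^[j] fM)) →
      (P.r 2 x).1 = Sum.inr (N.r 2 ((N.faceStep)^[j] fN)))
    (h2d : ∀ (j : ℕ) (x : ↥(connSumFlags M N fM fN)),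
      x.1 = Sum.inl (M.r 2 ((M.faceStep)^[j] (M.r 1 fM))) →
      (P.r 2 x).1 = Sum.inr (N.r 2 ((N.faceStep)^[j] (N.r 1 fN))))
    (I : Set (Fin 3)) (hI : M.Colorable I) (hJ : N.Colorable I) :
    P.Colorable I := by
  obtain ⟨a, ha⟩ := hI
  obtain ⟨b, hb⟩ := hJ
  replace ha : ∀ f j, a (M.r j f) = a f + colInc I j := (isColoringOn_iff _ _ _).1 ha
  replace hb : ∀ f j, b (N.r j f) = b f + colInc I j := (isColoringOn_iff _ _ _).1 hb
  have two : ∀ z : ZMod 2, z + z = 0 := by decide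
  obtain ⟨c, hc⟩ : ∃ c : ZMod 2, b fN + c = a fM + colInc I 2 :=
    ⟨a fM + colInc I 2 - b fN, by ring⟩
  let col : Ω ⊕ Ω' → ZMod 2 := Sum.elim a (fun g => b g + c)
  -- the listed boundary flags on the `M` side
  have hMside : ∀ (x : ↥(connSumFlags M N fM fN)) (g : Ω), x.1 = Sum.inl g →
      M.r 2 g ∈ M.faceOf fM → col (P.r 2 x).1 = col x.1 + colInc I 2 := by
    intro x g hx hg
    obtain ⟨j, hj | hj⟩ := M.face_sub_listed fM hMfin hg
    · have hgj : g = M.r 2 ((M.faceStep)^[j] fM) := by rw [← hj, M.invol]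
      rw [h2c j x (by rw [hx, hgj]), hx, hgj]
      simp only [col, Sum.elim_inl, Sum.elim_inr, ha, hb, col_iter M I a ha, col_iter N I b hb]
      linear_combination hc
    · have hgj : g = M.r 2 ((M.faceStep)^[j] (M.r 1 fM)) := by rw [← hj, M.invol]
      rw [h2d j x (by rw [hx, hgj]), hx, hgj]
      simp only [col, Sum.elim_inl, Sum.elim_inr, ha, hb, col_iter M I a ha, col_iter N I b hb]
      linear_combination hc
  have back : ∀ (x y : ↥(connSumFlags M N fM fN)) (g : Ω), y.1 = Sum.inl g →
      M.r 2 g ∈ M.faceOf fM → P.r 2 y = x → col (P.r 2 x).1 = col x.1 + colInc I 2 := by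
    intro x y g hy hg hyx
    have h := hMside y g hy hg
    subst hyx
    rw [P.invol, h, add_assoc, two, add_zero]
  refine ⟨fun x => col x.1, (isColoringOn_iff _ _ _).2 ?_⟩
  intro x j
  fin_cases j
  · change col (P.r 0 x).1 = _
    rw [h0]
    rcases x with ⟨g | g, hx⟩ <;> simp [col, ha, hb] <;> ring
  · change col (P.r 1 x).1 = _
    rw [h1]
    rcases x with ⟨g | g, hx⟩ <;> simp [col, ha, hb] <;> ring
  · change col (P.r 2 x).1 = col x.1 + colInc I 2
    rcases hxe : x.1 with g | g
    · by_cases hg : M.r 2 g ∈ M.faceOf fM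
      · rw [← hxe]
        exact hMside x g hxe hg
      · rw [h2a x g hxe hg]
        simp [col, ha]
    · by_cases hg : N.r 2 g ∈ N.faceOf fN
      · rw [← hxe]
        obtain ⟨j, hj | hj⟩ := N.face_sub_listed fN hNfin hg
        · have hgj : g = N.r 2 ((N.faceStep)^[j] fN) := by rw [← hj, N.invol]
          have hm := M.iter_mem fM fM (M.self_mem_faceOf fM) j
          refine back x ⟨Sum.inl (M.r 2 ((M.faceStep)^[j] fM)), hM2 _ hm⟩ _ rfl
            (by rwa [M.invol]) (Subtype.ext ?_)
          rw [h2c j _ rfl, hxe, hgj]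
        · have hgj : g = N.r 2 ((N.faceStep)^[j] (N.r 1 fN)) := by rw [← hj, N.invol]
          have hm := M.iter_mem fM _
            (M.faceOf_r _ _ 1 (Or.inr rfl) (M.self_mem_faceOf fM)) j
          refine back x ⟨Sum.inl (M.r 2 ((M.faceStep)^[j] (M.r 1 fM))), hM2 _ hm⟩ _ rfl
            (by rwa [M.invol]) (Subtype.ext ?_)
          rw [h2d j _ rfl, hxe, hgj]
      · rw [h2b x g hxe hg]
        simp [col, hb]
        ring
end

section
/- If a map M admits an I-coloring, then opp(M) admits a J-coloring, where J = I if 0 ∉ I, and J = IΔ{2} if 0 ∈ I. -/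
/-- The connections `(r₀, r₁, r₀r₂)` of the opposite map `opp(M)`
(`f·(r₀r₂)` means apply `r₀`, then `r₂`). -/
def oppConn {Ω : Type} (M : CMap Ω) : Fin 3 → Ω → Ω :=
  ![fun f => M.r 0 f, fun f => M.r 1 f, fun f => M.r 2 (M.r 0 f)]

/-- The connections `(r₀r₂, r₁, r₂)` of the Petrie map `P(M)`. -/
def petrieConn {Ω : Type} (M : CMap Ω) : Fin 3 → Ω → Ω :=
  ![fun f => M.r 2 (M.r 0 f), fun f => M.r 1 f, fun f => M.r 2 f]

/-- if `M` admits an `I`-coloring then `opp(M)` admits a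
`J`-coloring, where `J = I` if `0 ∉ I` and `J = I Δ {2}` if `0 ∈ I`. -/
theorem opp_colorable {Ω : Type} (M : CMap Ω) (I : Set (Fin 3)) (h : M.Colorable I) :
    (0 ∉ I → ColorableOn (oppConn M) I) ∧
      (0 ∈ I → ColorableOn (oppConn M) (symmDiff I {2})) := by
  obtain ⟨a, ha⟩ := h
  have c2 : ∀ x : ZMod 2, x + 1 + 1 = x := by decide
  have key : ∀ (f : Ω) (j : Fin 3),
      (j ∈ I → a (M.r j f) = a f + 1) ∧ (j ∉ I → a (M.r j f) = a f) := ha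
  constructor
  · intro h0
    refine ⟨a, fun f j => ?_⟩
    have e0 : a (M.r 0 f) = a f := (key f 0).2 h0
    fin_cases j
    · exact key f 0
    · exact key f 1
    · have k := key (M.r 0 f) 2
      rw [e0] at k
      exact k
  · intro h0
    refine ⟨a, fun f j => ?_⟩
    have e0 : a (M.r 0 f) = a f + 1 := (key f 0).1 h0
    fin_cases j
    · have k := key f 0
      simpa [Set.mem_symmDiff, oppConn] using k
    · have k := key f 1
      simpa [Set.mem_symmDiff, oppConn] using k
    · have k := key (M.r 0 f) 2
      rw [e0, c2] at k
      simp only [Set.mem_symmDiff, oppConn]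
      by_cases h2 : (2 : Fin 3) ∈ I
      · simpa [h2] using k
      · simpa [h2] using k
end

section
/- If a map M admits an I-coloring, then the Petrie map P(M) admits a J-coloring, where J = I if 2 ∉ I, and J = IΔ{0} if 2 ∈ I. -/
/-- if `M` admits an `I`-coloring then the Petrie map `P(M)`
admits a `J`-coloring, where `J = I` if `2 ∉ I` and `J = I Δ {0}` if `2 ∈ I`. -/
theorem petrie_colorable {Ω : Type} (M : CMap Ω) (I : Set (Fin 3)) (h : M.Colorable I) :
    (2 ∉ I → ColorableOn (petrieConn M) I) ∧
      (2 ∈ I → ColorableOn (petrieConn M) (symmDiff I {0})) := by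
  obtain ⟨a, ha⟩ := h
  have h2 : (1 : ZMod 2) + 1 = 0 := by decide
  have ha' : ∀ (f : Ω) (j : Fin 3),
      (j ∈ I → a (M.r j f) = a f + 1) ∧ (j ∉ I → a (M.r j f) = a f) := ha
  constructor
  · intro hI
    refine ⟨a, fun f j => ?_⟩
    fin_cases j
    · change (0 ∈ I → a (M.r 2 (M.r 0 f)) = a f + 1) ∧ (0 ∉ I → a (M.r 2 (M.r 0 f)) = a f)
      rw [(ha' (M.r 0 f) 2).2 hI]
      exact ha' f 0
    · exact ha' f 1
    · exact ha' f 2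
  · intro hI
    refine ⟨a, fun f j => ?_⟩
    fin_cases j
    · change (0 ∈ symmDiff I {0} → a (M.r 2 (M.r 0 f)) = a f + 1) ∧
        (0 ∉ symmDiff I {0} → a (M.r 2 (M.r 0 f)) = a f)
      rw [(ha' (M.r 0 f) 2).1 hI]
      by_cases h0 : (0 : Fin 3) ∈ I
      · rw [(ha' f 0).1 h0, add_assoc, h2]
        simp [Set.mem_symmDiff, h0]
      · rw [(ha' f 0).2 h0]
        simp [Set.mem_symmDiff, h0]
    · have := ha' f 1
      change (1 ∈ symmDiff I {0} → a (M.r 1 f) = a f + 1) ∧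
        (1 ∉ symmDiff I {0} → a (M.r 1 f) = a f)
      simpa [Set.mem_symmDiff] using this
    · have := ha' f 2
      change (2 ∈ symmDiff I {0} → a (M.r 2 f) = a f + 1) ∧
        (2 ∉ symmDiff I {0} → a (M.r 2 f) = a f)
      simpa [Set.mem_symmDiff] using this
end

section
/- For a map M, T(M) is the full power set of {0,1,2} (i.e., M admits an I-coloring for every subset I of {0,1,2}) if and only if {0,1,2} ∈ T(M), {0,1,2} ∈ T(opp(M)), and {0,1,2} ∈ T(P(M)) (i.e., M, opp(M) and P(M) each admit an {0,1,2}-coloring, which is the combinatorial formulation of all three being orientable). -/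
/-- `T M` is the full power set of `{0,1,2}` iff `M`, `opp(M)`
and `P(M)` all admit `{0,1,2}`-colorings (i.e. all three are orientable). -/
theorem T_univ_iff_orientable_derivates {Ω : Type} (M : CMap Ω) :
    M.T = Set.univ ↔
      (M.Colorable {0, 1, 2} ∧ ColorableOn (oppConn M) {0, 1, 2} ∧
        ColorableOn (petrieConn M) {0, 1, 2}) := by
  classical
  have two : ∀ x : ZMod 2, x + x = 0 := by decide
  constructor
  · intro h
    have hT : ∀ I, M.Colorable I := fun I => by
      have : I ∈ M.T := by rw [h]; trivial
      exact this
    refine ⟨hT _, ?_, ?_⟩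
    · obtain ⟨a, ha⟩ := hT {0, 1}
      refine ⟨a, fun f j => ⟨fun _ => ?_, fun hj => ?_⟩⟩
      · have h0 : ∀ f, a (M.r 0 f) = a f + 1 := fun f => (ha f 0).1 (by simp)
        have h1 : ∀ f, a (M.r 1 f) = a f + 1 := fun f => (ha f 1).1 (by simp)
        have h2 : ∀ f, a (M.r 2 f) = a f := fun f => (ha f 2).2 (by simp)
        fin_cases j <;> simp [oppConn, h0, h1, h2]
      · exfalso; fin_cases j <;> simp at hj
    · obtain ⟨a, ha⟩ := hT {1, 2}
      refine ⟨a, fun f j => ⟨fun _ => ?_, fun hj => ?_⟩⟩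
      · have h0 : ∀ f, a (M.r 0 f) = a f := fun f => (ha f 0).2 (by simp)
        have h1 : ∀ f, a (M.r 1 f) = a f + 1 := fun f => (ha f 1).1 (by simp)
        have h2 : ∀ f, a (M.r 2 f) = a f + 1 := fun f => (ha f 2).1 (by simp)
        fin_cases j <;> simp [petrieConn, h0, h1, h2]
      · exfalso; fin_cases j <;> simp at hj
  · rintro ⟨⟨a, ha⟩, ⟨b, hb⟩, ⟨c, hc⟩⟩
    have a0 : ∀ f, a (M.r 0 f) = a f + 1 := fun f => (ha f 0).1 (by simp)
    have a1 : ∀ f, a (M.r 1 f) = a f + 1 := fun f => (ha f 1).1 (by simp)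
    have a2 : ∀ f, a (M.r 2 f) = a f + 1 := fun f => (ha f 2).1 (by simp)
    have b0 : ∀ f, b (M.r 0 f) = b f + 1 := fun f => (hb f 0).1 (by simp)
    have b1 : ∀ f, b (M.r 1 f) = b f + 1 := fun f => (hb f 1).1 (by simp)
    have b2' : ∀ f, b (M.r 2 (M.r 0 f)) = b f + 1 := fun f => (hb f 2).1 (by simp)
    have c0' : ∀ f, c (M.r 2 (M.r 0 f)) = c f + 1 := fun f => (hc f 0).1 (by simp)
    have c1 : ∀ f, c (M.r 1 f) = c f + 1 := fun f => (hc f 1).1 (by simp)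
    have c2 : ∀ f, c (M.r 2 f) = c f + 1 := fun f => (hc f 2).1 (by simp)
    have b2 : ∀ f, b (M.r 2 f) = b f := fun f => by
      have h := b2' (M.r 0 f)
      rw [M.invol, b0, add_assoc, two, add_zero] at h
      exact h
    have c0 : ∀ f, c (M.r 0 f) = c f := fun f => by
      have h := c0' f
      rw [c2] at h
      exact add_right_cancel h
    refine Set.eq_univ_of_forall fun I => ?_
    refine ⟨fun f => (if (0 : Fin 3) ∈ I then a f + c f else 0) +
      (if (1 : Fin 3) ∈ I then a f + b f + c f else 0) +
      (if (2 : Fin 3) ∈ I then a f + b f else 0), fun f j => ?_⟩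
    have key : ∀ x y z : ZMod 2, ∀ p q r : Bool,
      ((if p then (x+1)+z else 0) + (if q then (x+1)+(y+1)+z else 0) +
        (if r then (x+1)+(y+1) else 0) =
       (if p then x+z else 0) + (if q then x+y+z else 0) + (if r then x+y else 0)
        + (if p then 1 else 0)) ∧
      ((if p then (x+1)+(z+1) else 0) + (if q then (x+1)+(y+1)+(z+1) else 0) +
        (if r then (x+1)+(y+1) else 0) =
       (if p then x+z else 0) + (if q then x+y+z else 0) + (if r then x+y else 0)
        + (if q then 1 else 0)) ∧
      ((if p then (x+1)+(z+1) else 0) + (if q then (x+1)+y+(z+1) else 0) +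
        (if r then (x+1)+y else 0) =
       (if p then x+z else 0) + (if q then x+y+z else 0) + (if r then x+y else 0)
        + (if r then 1 else 0)) := by decide
    have k := key (a f) (b f) (c f) (decide (0 ∈ I)) (decide (1 ∈ I)) (decide (2 ∈ I))
    simp only [decide_eq_true_eq] at k
    obtain ⟨k0, k1, k2⟩ := k
    fin_cases j
    · refine ⟨fun h => ?_, fun h => ?_⟩ <;> change _ at h <;>
        simp only [Fin.zero_eta] at h ⊢ <;> simp only [a0, b0, c0, k0] <;> simp [h]
    · refine ⟨fun h => ?_, fun h => ?_⟩ <;>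
        simp only [Fin.mk_one] at h ⊢ <;> simp only [a1, b1, c1, k1] <;> simp [h]
    · refine ⟨fun h => ?_, fun h => ?_⟩ <;>
        simp only [Fin.reduceFinMk] at h ⊢ <;> simp only [a2, b2, c2, k2] <;> simp [h]
end

section
/- A map M admits a {1}-coloring if and only if its medial Med(M) admits a {0}-coloring. -/
/-- The connections of the medial map `Med(M)` on `Ω × ℤ/2ℤ`:
`(f,i)·s₀ = (f·r₁, i)`, `(f,0)·s₁ = (f·r₀, 0)`, `(f,1)·s₁ = (f·r₂, 1)`,
`(f,i)·s₂ = (f, 1-i)`. -/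
def medialConn {Ω : Type} (M : CMap Ω) : Fin 3 → (Ω × ZMod 2) → (Ω × ZMod 2) :=
  ![fun x => (M.r 1 x.1, x.2),
    fun x => (if x.2 = 0 then M.r 0 x.1 else M.r 2 x.1, x.2),
    fun x => (x.1, 1 - x.2)]

/-- `M` admits a `{1}`-coloring iff `Med(M)` admits a `{0}`-coloring. -/
theorem colorable_one_iff_medial_colorable_zero {Ω : Type} (M : CMap Ω) :
    M.Colorable {1} ↔ ColorableOn (medialConn M) {0} := by
  constructor
  · rintro ⟨a, ha⟩
    refine ⟨fun x => a x.1, ?_⟩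
    rintro ⟨f, i⟩ j
    have h0 : a (M.r 0 f) = a f := (ha f 0).2 (by simp)
    have h1 : a (M.r 1 f) = a f + 1 := (ha f 1).1 (by simp)
    have h2 : a (M.r 2 f) = a f := (ha f 2).2 (by simp)
    fin_cases j
    · simp [medialConn, h1]
    · by_cases hi : i = 0 <;> simp [medialConn, hi, h0, h2]
    · simp [medialConn]
  · rintro ⟨a, ha⟩
    have hs : ∀ f, a (f, 1) = a (f, 0) := by
      intro f
      have h := (ha (f, 0) 2).2 (by simp)
      simpa [medialConn] using h
    refine ⟨fun f => a (f, 0), ?_⟩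
    intro f j
    have h0 := (ha (f, 0) 0).1 (by simp)
    have h1 := (ha (f, 0) 1).2 (by simp)
    have h2 := (ha (f, 1) 1).2 (by simp)
    simp [medialConn, hs] at h0 h1 h2
    fin_cases j
    · simp [h1]
    · simp [h0]
    · simp [h2]
end

section
/- A map M admits a {0,2}-coloring if and only if its medial Med(M) admits a {1}-coloring. -/
/-- `M` admits a `{0,2}`-coloring iff `Med(M)` admits a `{1}`-coloring. -/
theorem colorable_02_iff_medial_colorable_one {Ω : Type} (M : CMap Ω) :
    M.Colorable {0, 2} ↔ ColorableOn (medialConn M) {1} := by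
  constructor
  · rintro ⟨a, ha⟩
    refine ⟨fun x => a x.1, ?_⟩
    rintro ⟨f, i⟩ j
    have h0 := (ha f 0).1 (by simp)
    have h1 := (ha f 1).2 (by simp)
    have h2 := (ha f 2).1 (by simp)
    simp only at h0 h1 h2
    fin_cases j
    · simp [medialConn, h1]
    · by_cases hi : i = 0 <;> simp [medialConn, hi, h0, h2]
    · simp [medialConn]
  · rintro ⟨b, hb⟩
    refine ⟨fun f => b (f, 0), ?_⟩
    intro f j
    have e : ∀ g, b (g, 1) = b (g, 0) := fun g => by
      simpa [medialConn] using (hb (g, 0) 2).2 (by simp)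
    have h0 : b (M.r 1 f, 0) = b (f, 0) := by
      simpa [medialConn] using (hb (f, 0) 0).2 (by simp)
    have h1 : b (M.r 0 f, 0) = b (f, 0) + 1 := by
      simpa [medialConn] using (hb (f, 0) 1).1 (by simp)
    have h2 : b (M.r 2 f, 0) = b (f, 0) + 1 := by
      simpa [medialConn, e] using (hb (f, 1) 1).1 (by simp)
    fin_cases j
    · simp [h1]
    · simp [h0]
    · simp [h2]
end

section
/- If a map M admits a J-coloring, then for every I ⊆ {0,1,2} the I-double I≻M is isomorphic to the (IΔJ)-double (IΔJ)≻M; that is, there exists a bijection ψ : Ω×ℤ/2ℤ → Ω×ℤ/2ℤ satisfying ψ(x·tⱼ) = ψ(x)·t′ⱼ for all x and all j ∈ {0,1,2}, where (t₀,t₁,t₂) and (t′₀,t′₁,t′₂) are the connections of I≻M and (IΔJ)≻M respectively. -/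
open Classical in
/-- The `j`-th connection of the `I`-double `I ≻ M` on `Ω × ℤ/2ℤ`:
`(f,i)·tⱼ = (f·rⱼ, i)` if `j ∉ I` and `(f,i)·tⱼ = (f·rⱼ, i+1)` if `j ∈ I`. -/
noncomputable def dblPerm {Ω : Type} (M : CMap Ω) (I : Set (Fin 3)) (j : Fin 3) :
    Equiv.Perm (Ω × ZMod 2) :=
  (M.r j).prodCongr (Equiv.addRight (if j ∈ I then (1 : ZMod 2) else 0))

/-- if `M` admits a `J`-coloring, then for every `I` the doubles
`I ≻ M` and `(I Δ J) ≻ M` are isomorphic. -/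
theorem double_iso_of_colorable {Ω : Type} (M : CMap Ω) (J : Set (Fin 3))
    (hJ : M.Colorable J) (I : Set (Fin 3)) :
    ∃ ψ : (Ω × ZMod 2) ≃ (Ω × ZMod 2),
      ∀ (x : Ω × ZMod 2) (j : Fin 3),
        ψ (dblPerm M I j x) = dblPerm M (symmDiff I J) j (ψ x) := by
  obtain ⟨a, ha⟩ := hJ
  have h2 : ∀ x : ZMod 2, x + x = 0 := by decide
  refine ⟨⟨fun x => (x.1, x.2 + a x.1), fun x => (x.1, x.2 + a x.1), ?_, ?_⟩, ?_⟩
  · rintro ⟨f, i⟩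
    simp [add_assoc, h2]
  · rintro ⟨f, i⟩
    simp [add_assoc, h2]
  · rintro ⟨f, i⟩ j
    have key : ∀ x y : ZMod 2, x + 1 + (y + 1) = x + y := by decide
    obtain ⟨h1, h0⟩ := ha f j
    simp only [] at h1 h0
    by_cases hI : j ∈ I <;> by_cases hj : j ∈ J
    · simp [dblPerm, Set.mem_symmDiff, hI, hj, h1 hj, key]
    · simp [dblPerm, Set.mem_symmDiff, hI, hj, h0 hj, add_right_comm]
    · simp [dblPerm, Set.mem_symmDiff, hI, hj, h1 hj, add_assoc]
    · simp [dblPerm, Set.mem_symmDiff, hI, hj, h0 hj]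
end

section
/- Let M be a map and let I ⊆ {0,1,2} with I ∉ T(M) (i.e., M admits no I-coloring). Then the I-double I≻M is a map (in particular ⟨t₀,t₁,t₂⟩ acts transitively on Ω×ℤ/2ℤ), and T(I≻M) = T(M) ∪ {IΔJ : J ∈ T(M)}, the subgroup of the power set of {0,1,2} under symmetric difference generated by T(M) together with I. -/
theorem CMap.inv_all {Ω : Type} (M : CMap Ω) (P : Ω → Prop)
    (h : ∀ j f, P f → P (M.r j f)) (f g : Ω) (hf : P f) : P g := by
  obtain ⟨w, hw, rfl⟩ := M.flag_transitive f g
  have h' : ∀ j f, P f ↔ P (M.r j f) := fun j f =>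
    ⟨h j f, fun hp => by simpa [M.invol] using h j _ hp⟩
  have key : ∀ f, P f ↔ P (w f) := by
    induction hw using Subgroup.closure_induction with
    | mem x hx =>
      intro f
      rcases hx with rfl | rfl | rfl <;> exact h' _ f
    | one => intro f; rfl
    | mul x y _ _ hx hy => intro f; rw [hy f, hx (y f)]; rfl
    | inv x _ hx => intro f; rw [hx (x⁻¹ f)]; simp
  exact (key f).1 hf

theorem dbl_not_mem {Ω : Type} (M : CMap Ω) {I : Set (Fin 3)} {j : Fin 3} (h : j ∉ I)
    (f : Ω) (i : ZMod 2) : dblPerm M I j (f, i) = (M.r j f, i) := by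
  simp [dblPerm, h]

theorem dbl_mem {Ω : Type} (M : CMap Ω) {I : Set (Fin 3)} {j : Fin 3} (h : j ∈ I)
    (f : Ω) (i : ZMod 2) : dblPerm M I j (f, i) = (M.r j f, i + 1) := by
  simp [dblPerm, h]

theorem zmod2_add_one_one (i : ZMod 2) : i + 1 + 1 = i := by
  revert i; decide

theorem zmod2_cases (i : ZMod 2) : i = 0 ∨ i = 1 := by
  revert i; decide

theorem dbl_invol {Ω : Type} (M : CMap Ω) (I : Set (Fin 3)) (j : Fin 3) (x : Ω × ZMod 2) :
    dblPerm M I j (dblPerm M I j x) = x := by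
  obtain ⟨f, i⟩ := x
  by_cases h : j ∈ I
  · simp [dbl_mem M h, M.invol, zmod2_add_one_one]
  · simp [dbl_not_mem M h, M.invol]

theorem dbl_fst {Ω : Type} (M : CMap Ω) (I : Set (Fin 3)) (j : Fin 3) (x : Ω × ZMod 2) :
    (dblPerm M I j x).1 = M.r j x.1 := rfl

theorem dbl_inv_all {Ω : Type} (M : CMap Ω) (I : Set (Fin 3)) (hI : ¬M.Colorable I)
    (Q : Ω × ZMod 2 → Prop) (h : ∀ j x, Q x → Q (dblPerm M I j x))
    (x y : Ω × ZMod 2) (hx : Q x) : Q y := by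
  classical
  have one2 : (1 : ZMod 2) + 1 = 0 := by decide
  have hmem : ∀ j ∈ I, ∀ f, (Q (f, 0) → Q (M.r j f, 1)) ∧ (Q (f, 1) → Q (M.r j f, 0)) := by
    intro j hj f
    refine ⟨fun q => ?_, fun q => ?_⟩
    · simpa [dbl_mem M hj] using h j _ q
    · simpa [dbl_mem M hj, one2] using h j _ q
  have hnot : ∀ j, j ∉ I → ∀ f, ∀ i, (Q (f, i) → Q (M.r j f, i)) := by
    intro j hj f i q
    simpa [dbl_not_mem M hj] using h j _ q
  have hor : ∀ f, Q (f, 0) ∨ Q (f, 1) := by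
    intro f
    refine M.inv_all (fun f => Q (f, 0) ∨ Q (f, 1)) ?_ x.1 f ?_
    · intro j f hf
      by_cases hj : j ∈ I
      · have := hmem j hj f; tauto
      · have h0 := hnot j hj f 0
        have h1 := hnot j hj f 1
        tauto
    · obtain ⟨g, i⟩ := x
      rcases zmod2_cases i with rfl | rfl
      · exact Or.inl hx
      · exact Or.inr hx
  have hand : ∃ f, Q (f, 0) ∧ Q (f, 1) := by
    by_contra hno
    push Not at hno
    apply hI
    refine ⟨fun f => if Q (f, 0) then 0 else 1, fun f j => ⟨fun hj => ?_, fun hj => ?_⟩⟩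
    · have a1 := hmem j hj f
      have a2 := hno f
      have a3 := hno (M.r j f)
      have a4 := hor f
      by_cases q : Q (f, 0)
      · have : ¬ Q (M.r j f, 0) := by tauto
        simp [q, this]
      · have : Q (M.r j f, 0) := by tauto
        simp [q, this, one2]
    · have a0 := hnot j hj f 0
      have a1 := hnot j hj f 1
      have a2 := hno f
      have a3 := hno (M.r j f)
      have a4 := hor f
      by_cases q : Q (f, 0)
      · have : Q (M.r j f, 0) := by tauto
        simp [q, this]
      · have : ¬ Q (M.r j f, 0) := by tauto
        simp [q, this]
  obtain ⟨f, hf⟩ := hand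
  have hall : ∀ g, Q (g, 0) ∧ Q (g, 1) := by
    intro g
    refine M.inv_all (fun f => Q (f, 0) ∧ Q (f, 1)) ?_ f g hf
    intro j f hf
    by_cases hj : j ∈ I
    · have := hmem j hj f; tauto
    · exact ⟨hnot j hj f 0 hf.1, hnot j hj f 1 hf.2⟩
  obtain ⟨g, i⟩ := y
  rcases zmod2_cases i with rfl | rfl
  · exact (hall g).1
  · exact (hall g).2

/-- if `M` admits no `I`-coloring, then the `I`-double `I ≻ M` is
a map (in particular its connection group is transitive on `Ω × ℤ/2ℤ`), and
`T (I ≻ M) = T M ∪ {I Δ J : J ∈ T M}`, the subgroup generated by `T M` and `I`. -/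
theorem T_of_double {Ω : Type} (M : CMap Ω) (I : Set (Fin 3)) (hI : ¬M.Colorable I) :
    (∃ P : CMap (Ω × ZMod 2), P.r = dblPerm M I) ∧
      {J : Set (Fin 3) | ColorableOn (fun j x => dblPerm M I j x) J} =
        M.T ∪ {K : Set (Fin 3) | ∃ J ∈ M.T, K = symmDiff I J} := by
  have one2 : (1 : ZMod 2) + 1 = 0 := by decide
  constructor
  · refine ⟨{ r := dblPerm M I, nonempty := ?_, invol := dbl_invol M I, fpf := ?_,
              comm02 := ?_, fpf02 := ?_, flag_transitive := ?_ }, rfl⟩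
    · obtain ⟨f⟩ := M.nonempty
      exact ⟨(f, 0)⟩
    · intro j x hx
      exact M.fpf j x.1 (congrArg Prod.fst hx)
    · rintro ⟨f, i⟩
      refine Prod.ext (M.comm02 f) ?_
      exact add_right_comm _ _ _
    · intro x hx
      exact M.fpf02 x.1 (congrArg Prod.fst hx)
    · intro x y
      refine dbl_inv_all M I hI (fun y => ∃ w ∈ Subgroup.closure
        ({dblPerm M I 0, dblPerm M I 1, dblPerm M I 2} : Set (Equiv.Perm (Ω × ZMod 2))),
        w x = y) ?_ x y ⟨1, Subgroup.one_mem _, rfl⟩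
      rintro j _ ⟨w, hw, rfl⟩
      refine ⟨dblPerm M I j * w, Subgroup.mul_mem _ (Subgroup.subset_closure ?_) hw, rfl⟩
      fin_cases j <;> simp
  · ext J
    constructor
    · rintro ⟨b, hb⟩
      have hc : ∀ f g, b (f, 1) + b (f, 0) = b (g, 1) + b (g, 0) := by
        intro f g
        refine M.inv_all (fun g => b (f, 1) + b (f, 0) = b (g, 1) + b (g, 0)) ?_ f g rfl
        intro j g hg
        rw [hg]
        have h0 := hb (g, 0) j
        have h1 := hb (g, 1) j
        by_cases hj : j ∈ I <;> by_cases hJ : j ∈ J <;>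
          simp only [dbl_mem, dbl_not_mem, hj, hJ, one2, zero_add, not_true_eq_false,
            not_false_eq_true, true_implies, false_implies, and_true, true_and] at h0 h1 <;>
          rw [h0, h1] <;> generalize b (g, 0) = u <;> generalize b (g, 1) = v <;>
          revert u v <;> decide
      obtain ⟨f0⟩ := M.nonempty
      rcases zmod2_cases (b (f0, 1) + b (f0, 0)) with hz | hz
      · left
        have hbe : ∀ f, b (f, 1) = b (f, 0) := by
          intro f
          have := (hc f0 f).symm.trans hz
          revert this
          generalize b (f, 0) = u
          generalize b (f, 1) = v
          revert u v; decide
        refine ⟨fun f => b (f, 0), fun f j => ?_⟩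
        have h0 := hb (f, 0) j
        by_cases hj : j ∈ I
        · simpa only [dbl_mem M hj, zero_add, hbe] using h0
        · simpa only [dbl_not_mem M hj] using h0
      · right
        have hbe : ∀ f, b (f, 1) = b (f, 0) + 1 := by
          intro f
          have := (hc f0 f).symm.trans hz
          revert this
          generalize b (f, 0) = u
          generalize b (f, 1) = v
          revert u v; decide
        refine ⟨symmDiff I J, ⟨fun f => b (f, 0), fun f j => ?_⟩,
          (symmDiff_symmDiff_cancel_left I J).symm⟩
        have h1 := hb (f, 1) j
        have h0 := hb (f, 0) j
        by_cases hj : j ∈ I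
        · simp only [dbl_mem M hj, one2, hbe, zmod2_add_one_one] at h1
          simp only [Set.mem_symmDiff, hj]
          tauto
        · simp only [dbl_not_mem M hj] at h0
          simp only [Set.mem_symmDiff, hj]
          tauto
    · rintro (⟨a, ha⟩ | ⟨J, ⟨a, ha⟩, rfl⟩)
      · exact ⟨fun x => a x.1, fun x j => ha x.1 j⟩
      · refine ⟨fun x => a x.1 + x.2, ?_⟩
        rintro ⟨f, i⟩ j
        have h := ha f j
        by_cases hj : j ∈ I <;> by_cases hJ : j ∈ J <;>
          simp only [Set.mem_symmDiff, dbl_mem, dbl_not_mem, hj, hJ, not_true_eq_false,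
            not_false_eq_true, true_implies, false_implies, and_true, true_and,
            and_false, false_and, or_false, or_true, false_or, and_self] at h ⊢ <;>
          rw [h] <;> generalize a f = u <;> revert u i <;> decide
end
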